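/- arXiv:1503.05931 — 3 statements merged into one kernel-verified Lean document; each statement's English description precedes it below -/
import Mathlib

section
/- Every compact, locally connected metric space X is locally arcwise connected: for every point p ∈ X and every neighborhood U of p, there exists a neighborhood V of p contained in U such that any two distinct points of V are joined by an arc whose image is contained in V. -/
open Function Set Topology

/-- `x` and `y` are joined by an arc (a continuous injective path) lying in `S`. -/
def JoinedByArcIn {X : Type*} [TopologicalSpace X] (S : Set X) (x y : X) : Prop :=
  ∃ γ : unitInterval → X, Continuous γ ∧ Function.Injective γ ∧
    γ 0 = x ∧ γ 1 = y ∧ Set.range γ ⊆ S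

/-- `a` and `b` lie in a common preconnected set of diameter at most `r`. -/
def SmallConn {X : Type*} [MetricSpace X] (r : ℝ) (a b : X) : Prop :=
  ∃ C : Set X, IsPreconnected C ∧ a ∈ C ∧ b ∈ C ∧ ∀ u ∈ C, ∀ v ∈ C, dist u v ≤ r

theorem SmallConn.dist_le {X : Type*} [MetricSpace X] {r : ℝ} {a b : X} (h : SmallConn r a b) :
    dist a b ≤ r := by
  obtain ⟨C, -, ha, hb, hC⟩ := h
  exact hC a ha b hb

theorem SmallConn.symm {X : Type*} [MetricSpace X] {r : ℝ} {a b : X} (h : SmallConn r a b) :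
    SmallConn r b a := by
  obtain ⟨C, h0, ha, hb, hC⟩ := h
  exact ⟨C, h0, hb, ha, hC⟩

theorem SmallConn.rfl' {X : Type*} [MetricSpace X] {r : ℝ} (hr : 0 ≤ r) (a : X) :
    SmallConn r a a :=
  ⟨{a}, isPreconnected_singleton, by simp, by simp, by simpa using hr⟩

theorem smallConn_eventually {X : Type*} [MetricSpace X] [LocallyConnectedSpace X] {r : ℝ}
    (hr : 0 < r) (a : X) : ∀ᶠ b in 𝓝 a, SmallConn r a b := by
  have h1 : Metric.ball a (r / 2) ∈ 𝓝 a := Metric.ball_mem_nhds a (by linarith)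
  have h2 := connectedComponentIn_mem_nhds h1
  filter_upwards [h2] with b hb
  refine ⟨_, isPreconnected_connectedComponentIn, mem_connectedComponentIn (mem_of_mem_nhds h1),
    hb, ?_⟩
  intro u hu v hv
  have hu' := connectedComponentIn_subset _ _ hu
  have hv' := connectedComponentIn_subset _ _ hv
  rw [Metric.mem_ball] at hu' hv'
  have := dist_triangle_right u v a
  linarith

/-- there is a finite chain in `C` from `x` to `y` with steps of size `r` -/
def ChainIn {X : Type*} [MetricSpace X] (r : ℝ) (C : Set X) (x y : X) : Prop :=
  ∃ (N : ℕ) (c : ℕ → X), c 0 = x ∧ (∀ i, N ≤ i → c i = y) ∧ (∀ i, c i ∈ C) ∧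
    ∀ i, SmallConn r (c i) (c (i + 1))

theorem ChainIn.of_smallConn {X : Type*} [MetricSpace X] {r : ℝ} (hr : 0 ≤ r) {C : Set X} {x y : X}
    (hx : x ∈ C) (hy : y ∈ C) (h : SmallConn r x y) : ChainIn r C x y := by
  refine ⟨1, fun i => if i = 0 then x else y, by simp, ?_, ?_, ?_⟩
  · intro i hi
    have : i ≠ 0 := by omega
    simp [this]
  · intro i
    dsimp only
    split_ifs <;> assumption
  · intro i
    by_cases hi : i = 0
    · simpa [hi] using h
    · simpa [hi] using SmallConn.rfl' hr y

theorem ChainIn.trans {X : Type*} [MetricSpace X] {r : ℝ} {C : Set X} {x y z : X}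
    (h1 : ChainIn r C x y) (h2 : ChainIn r C y z) : ChainIn r C x z := by
  obtain ⟨N, c, c0, cN, cC, cS⟩ := h1
  obtain ⟨M, d, d0, dM, dC, dS⟩ := h2
  refine ⟨N + M, fun i => if i < N then c i else d (i - N), ?_, ?_, ?_, ?_⟩
  · dsimp only
    split_ifs with h
    · exact c0
    · have : N = 0 := by omega
      rw [Nat.zero_sub, d0, ← c0, cN 0 (by omega)]
  · intro i hi
    have : ¬ i < N := by omega
    simp only [this, if_false]
    exact dM _ (by omega)
  · intro i
    dsimp only
    split_ifs
    · exact cC _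
    · exact dC _
  · intro i
    by_cases h : i + 1 < N
    · have h' : i < N := by omega
      simp only [h, h', if_true]
      exact cS i
    · by_cases h' : i < N
      · simp only [h, h', if_true, if_false]
        have := cS i
        rw [cN (i + 1) (by omega)] at this
        have e : i + 1 - N = 0 := by omega
        rw [e, d0]
        exact this
      · simp only [h, h', if_false]
        have e : i + 1 - N = (i - N) + 1 := by omega
        rw [e]
        exact dS _

theorem chainIn_of_preconnected {X : Type*} [MetricSpace X] [LocallyConnectedSpace X] {r : ℝ}
    (hr : 0 < r) {C : Set X} (hC : IsPreconnected C) {x y : X} (hx : x ∈ C) (hy : y ∈ C) :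
    ChainIn r C x y := by
  refine hC.induction₂' (ChainIn r C) ?_ ?_ hx hy
  · intro u hu
    filter_upwards [self_mem_nhdsWithin, nhdsWithin_le_nhds (smallConn_eventually hr u)]
      with v hv huv
    exact ⟨.of_smallConn hr.le hu hv huv, .of_smallConn hr.le hv hu huv.symm⟩
  · intro u v w hu hv hw h1 h2
    exact h1.trans h2

/-- A finite chain, parametrized by the naturals, from `a` to `b`. -/
def GoodChain {X : Type*} [MetricSpace X] (a b : X) (r : ℝ) (s : ℕ × (ℕ → X)) : Prop :=
  0 < s.1 ∧ s.2 0 = a ∧ (∀ i, s.1 ≤ i → s.2 i = b) ∧ ∀ i, SmallConn r (s.2 i) (s.2 (i + 1))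

/-- Refining a chain. -/
def Refines {X : Type*} [MetricSpace X] (r : ℝ) (s t : ℕ × (ℕ → X)) : Prop :=
  ∃ N : ℕ, 0 < N ∧ t.1 = N * s.1 ∧ ∀ n, dist (s.2 (n / N)) (t.2 n) ≤ r

theorem GoodChain.refine {X : Type*} [MetricSpace X] [LocallyConnectedSpace X] {a b : X}
    {r r' : ℝ} (hr : 0 ≤ r) (hr' : 0 < r') {s : ℕ × (ℕ → X)} (hs : GoodChain a b r s) :
    ∃ t, GoodChain a b r' t ∧ Refines r s t := by
  obtain ⟨M, g⟩ := s
  obtain ⟨hM, g0, gM, gS⟩ := hs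
  dsimp only at hM g0 gM gS
  have key : ∀ i, ∃ (N : ℕ) (c : ℕ → X), (M ≤ i → N = 0) ∧ c 0 = g i ∧
      (∀ j, N ≤ j → c j = g (i + 1)) ∧ (∀ j, dist (g i) (c j) ≤ r) ∧
      ∀ j, SmallConn r' (c j) (c (j + 1)) := by
    intro i
    by_cases hi : M ≤ i
    · refine ⟨0, fun _ => g i, fun _ => rfl, rfl, fun j _ => ?_, fun j => by simpa using hr,
        fun j => SmallConn.rfl' hr'.le _⟩
      rw [gM i hi, gM (i + 1) (by omega)]
    · obtain ⟨C, hC, h1, h2, h3⟩ := gS i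
      obtain ⟨N, c, c0, cN, cC, cS⟩ := chainIn_of_preconnected hr' hC h1 h2
      exact ⟨N, c, fun h => absurd h hi, c0, cN, fun j => h3 _ h1 _ (cC j), cS⟩
  choose N c hN c0 cN cd cS using key
  set K := 1 + ∑ i ∈ Finset.range M, N i with hK
  have hNK : ∀ i, N i < K := by
    intro i
    by_cases hi : M ≤ i
    · rw [hN i hi]; omega
    · have := Finset.single_le_sum (f := N) (fun _ _ => Nat.zero_le _)
        (Finset.mem_range.2 (not_le.1 hi))
      omega
  have hK0 : 0 < K := by omega
  refine ⟨(K * M, fun n => c (n / K) (n % K)), ⟨by positivity, ?_, ?_, ?_⟩, K, hK0, rfl, ?_⟩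
  · simp [c0, g0]
  · intro n hn
    dsimp only at hn ⊢
    have h1 : M ≤ n / K := (Nat.le_div_iff_mul_le hK0).2 (by rw [mul_comm]; exact hn)
    rw [cN _ _ (by rw [hN _ h1]; omega), gM _ (by omega)]
  · intro n
    dsimp only
    have hlt := Nat.mod_lt n hK0
    have hdm := Nat.div_add_mod n K
    by_cases h : n % K + 1 < K
    · have e1 : (n + 1) / K = n / K := by
        rw [Nat.div_eq_iff hK0]
        constructor
        · have : n / K * K = K * (n / K) := mul_comm _ _
          omega
        · have : n / K * K = K * (n / K) := mul_comm _ _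
          omega
      have e2 : (n + 1) % K = n % K + 1 := by
        have := Nat.div_add_mod (n + 1) K
        rw [e1] at this
        omega
      rw [e1, e2]
      exact cS _ _
    · have e0 : n + 1 = K * (n / K + 1) := by
        rw [mul_add]; omega
      have e1 : (n + 1) / K = n / K + 1 := by
        rw [e0, Nat.mul_div_cancel_left _ hK0]
      have e2 : (n + 1) % K = 0 := by
        rw [e0, Nat.mul_mod_right]
      rw [e1, e2, c0]
      have := cS (n / K) (n % K)
      rwa [cN (n / K) (n % K + 1) (by have := hNK (n / K); omega)] at this
  · intro n
    exact cd _ _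

theorem exists_path_of_smallConn {X : Type*} [MetricSpace X] [CompleteSpace X]
    [LocallyConnectedSpace X] {r : ℝ} (hr : 0 < r) {a b : X} (hab : SmallConn r a b) :
    ∃ f : unitInterval → X, Continuous f ∧ f 0 = a ∧ f 1 = b ∧
      ∀ t, dist a (f t) ≤ 3 * r := by
  have hpos : ∀ k : ℕ, 0 < r / 2 ^ k := fun k => by positivity
  let startChain : {s : ℕ × (ℕ → X) // GoodChain a b (r / 2 ^ 0) s} :=
    ⟨(1, fun i => if i = 0 then a else b), by
      refine ⟨Nat.one_pos, by simp, ?_, ?_⟩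
      · intro i hi
        have : i ≠ 0 := by dsimp at hi; omega
        simp [this]
      · intro i
        by_cases hi : i = 0
        · simpa [hi] using hab
        · simpa [hi] using SmallConn.rfl' hr.le b⟩
  let S : (k : ℕ) → {s : ℕ × (ℕ → X) // GoodChain a b (r / 2 ^ k) s} := fun k =>
    Nat.rec startChain (fun k s => ⟨(s.2.refine (hpos k).le (hpos (k + 1))).choose,
      (s.2.refine (hpos k).le (hpos (k + 1))).choose_spec.1⟩) k
  have hS : ∀ k, Refines (r / 2 ^ k) (S k).1 (S (k + 1)).1 := fun k =>
    ((S k).2.refine (hpos k).le (hpos (k + 1))).choose_spec.2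
  have hG : ∀ k, GoodChain a b (r / 2 ^ k) (S k).1 := fun k => (S k).2
  have hS0 : (S 0).1 = (1, fun i => if i = 0 then a else b) := rfl
  generalize hT : (fun k => (S k).1) = T at *
  have hT' : ∀ k, (S k).1 = T k := fun k => congrFun hT k
  simp only [hT'] at hS hG hS0
  clear hT hT' S startChain
  let F : ℕ → unitInterval → X := fun k t => (T k).2 ⌊(t : ℝ) * (T k).1⌋₊
  have hF : ∀ k t, dist (F k t) (F (k + 1) t) ≤ (2 * r) / 2 / 2 ^ k := by
    intro k t
    obtain ⟨N, hN, hM, hd⟩ := hS k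
    have h := hd ⌊(t : ℝ) * (T (k + 1)).1⌋₊
    have e : ⌊(t : ℝ) * (T (k + 1)).1⌋₊ / N = ⌊(t : ℝ) * (T k).1⌋₊ := by
      rw [← Nat.floor_div_natCast, hM]
      congr 1
      push_cast
      field_simp
    rw [e] at h
    have e2 : (2 * r) / 2 / 2 ^ k = r / 2 ^ k := by ring
    rw [e2]
    exact h
  have hlim : ∀ t, ∃ x, Filter.Tendsto (fun k => F k t) Filter.atTop (𝓝 x) := fun t =>
    cauchySeq_tendsto_of_complete (cauchySeq_of_le_geometric_two (fun k => hF k t))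
  choose f hf using hlim
  have hdist : ∀ k t, dist (F k t) (f t) ≤ 2 * r / 2 ^ k := fun k t =>
    dist_le_of_le_geometric_two_of_tendsto (fun k => hF k t) (hf t) k
  refine ⟨f, ?_, ?_, ?_, ?_⟩
  · rw [Metric.continuous_iff']
    intro t ε hε
    obtain ⟨k, hk⟩ : ∃ k : ℕ, 5 * (r / 2 ^ k) < ε := by
      obtain ⟨k, hk⟩ := exists_pow_lt_of_lt_one (show 0 < ε / (5 * r) by positivity)
        (show (1 / 2 : ℝ) < 1 by norm_num)
      refine ⟨k, ?_⟩
      rw [lt_div_iff₀ (by positivity)] at hk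
      calc 5 * (r / 2 ^ k) = (1 / 2) ^ k * (5 * r) := by
            rw [div_pow, one_pow]; ring
        _ < ε := hk
    have hM : (0 : ℝ) < (T k).1 := by exact_mod_cast (hG k).1
    have step : ∀ s t : unitInterval, (s : ℝ) ≤ t → (t : ℝ) - s < 1 / (T k).1 →
        dist (F k s) (F k t) ≤ r / 2 ^ k := by
      intro s t hst h
      rw [lt_div_iff₀ hM] at h
      have h1 : ⌊(s : ℝ) * (T k).1⌋₊ ≤ ⌊(t : ℝ) * (T k).1⌋₊ :=
        Nat.floor_le_floor (by nlinarith)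
      have h2 : ⌊(t : ℝ) * (T k).1⌋₊ ≤ ⌊(s : ℝ) * (T k).1⌋₊ + 1 := by
        rw [← Nat.floor_add_one (mul_nonneg s.2.1 hM.le)]
        exact Nat.floor_le_floor (by nlinarith)
      show dist ((T k).2 _) ((T k).2 _) ≤ _
      rcases (by omega : ⌊(t : ℝ) * (T k).1⌋₊ = ⌊(s : ℝ) * (T k).1⌋₊ ∨
        ⌊(t : ℝ) * (T k).1⌋₊ = ⌊(s : ℝ) * (T k).1⌋₊ + 1) with h | h
      · rw [h, dist_self]; exact (hpos k).le
      · rw [h]; exact ((hG k).2.2.2 _).dist_le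
    have hnear : ∀ᶠ s : unitInterval in 𝓝 t, dist s t < 1 / (T k).1 :=
      Metric.ball_mem_nhds t (by positivity)
    filter_upwards [hnear] with s hs
    rw [Subtype.dist_eq, Real.dist_eq, abs_lt] at hs
    have h3 : dist (F k s) (F k t) ≤ r / 2 ^ k := by
      rcases le_total (s : ℝ) t with h | h
      · exact step s t h (by linarith)
      · rw [dist_comm]; exact step t s h (by linarith)
    have h1 := hdist k s
    have h2 := hdist k t
    have h4 := dist_triangle4 (f s) (F k s) (F k t) (f t)
    rw [dist_comm (f s) (F k s)] at h4
    have e : 2 * r / 2 ^ k = 2 * (r / 2 ^ k) := by ring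
    linarith
  · refine tendsto_nhds_unique (hf 0) ?_
    have : ∀ k, F k 0 = a := fun k => by
      show (T k).2 _ = a
      simp [(hG k).2.1]
    simp [this]
  · refine tendsto_nhds_unique (hf 1) ?_
    have : ∀ k, F k 1 = b := fun k => by
      show (T k).2 _ = b
      simp [(hG k).2.2.1]
    simp [this]
  · intro t
    have h1 := hdist 0 t
    have h2 : dist a (F 0 t) ≤ r := by
      show dist a ((T 0).2 _) ≤ r
      rw [hS0]
      dsimp only
      split_ifs
      · simpa using hr.le
      · exact hab.dist_le
    have h3 := dist_triangle a (F 0 t) (f t)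
    simp at h1
    linarith

theorem locPath_of_locConn (X : Type*) [MetricSpace X] [CompleteSpace X]
    [LocallyConnectedSpace X] : LocallyPathConnectedSpace X := by
  refine ⟨fun x => ?_⟩
  rw [Filter.hasBasis_self]
  intro U hU
  obtain ⟨ε, hε, hεU⟩ := Metric.mem_nhds_iff.1 hU
  refine ⟨pathComponentIn U x, ?_, isPathConnected_pathComponentIn (mem_of_mem_nhds hU),
    pathComponentIn_subset⟩
  filter_upwards [smallConn_eventually (show 0 < ε / 4 by positivity) x] with y hy
  obtain ⟨f, hf, h0, h1, hd⟩ := exists_path_of_smallConn (show 0 < ε / 4 by positivity) hy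
  refine ⟨⟨⟨f, hf⟩, h0, h1⟩, fun t => hεU ?_⟩
  rw [Metric.mem_ball, dist_comm]
  have := hd t
  show dist x (f t) < ε
  linarith

/-- Closed subsets of the unit interval such that `γ` agrees at the endpoints of each gap. -/
def GapSets {X : Type*} (γ : ℝ → X) : Set (Set ℝ) :=
  {F | F ⊆ Icc 0 1 ∧ IsClosed F ∧ (0 : ℝ) ∈ F ∧ (1 : ℝ) ∈ F ∧
    ∀ a ∈ F, ∀ b ∈ F, a < b → (∀ c ∈ F, ¬ (a < c ∧ c < b)) → γ a = γ b}

theorem exists_minimal_gapSet {X : Type*} [MetricSpace X] {γ : ℝ → X} (hγ : Continuous γ) :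
    ∃ F, Minimal (· ∈ GapSets γ) F := by
  have key := zorn_superset_nonempty (GapSets γ) ?_ (Icc 0 1) ?_
  · obtain ⟨m, -, hm⟩ := key
    exact ⟨m, hm⟩
  · intro c hc hchain hne
    refine ⟨⋂₀ c, ⟨?_, ?_, ?_, ?_, ?_⟩, fun s hs => sInter_subset_of_mem hs⟩
    · obtain ⟨s, hs⟩ := hne
      exact (sInter_subset_of_mem hs).trans (hc hs).1
    · exact isClosed_sInter fun s hs => (hc hs).2.1
    · exact fun s hs => (hc hs).2.2.1
    · exact fun s hs => (hc hs).2.2.2.1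
    · intro a ha b hb hab hgap
      refine dist_le_zero.1 (le_of_forall_pos_le_add fun ε hε => ?_)
      obtain ⟨δ1, hδ1, h1⟩ := Metric.continuous_iff.1 hγ a (ε / 2) (by positivity)
      obtain ⟨δ2, hδ2, h2⟩ := Metric.continuous_iff.1 hγ b (ε / 2) (by positivity)
      obtain ⟨η, hη, hη1, hη2, hη3⟩ : ∃ η : ℝ, 0 < η ∧ η < δ1 ∧ η < δ2 ∧ η < (b - a) / 2 := by
        have : 0 < min δ1 (min δ2 ((b - a) / 2)) := by
          refine lt_min hδ1 (lt_min hδ2 (by linarith))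
        obtain ⟨η, h0, h1⟩ := exists_between this
        simp only [lt_min_iff] at h1
        exact ⟨η, h0, h1.1, h1.2.1, h1.2.2⟩
      have : Nonempty c := hne.to_subtype
      obtain ⟨⟨G, hG⟩, hGe⟩ := (isCompact_Icc (a := a + η) (b := b - η)).elim_directed_family_closed
        (fun s : c => (s : Set ℝ)) (fun s => (hc s.2).2.1) (by
          rw [← sInter_eq_iInter, eq_empty_iff_forall_notMem]
          rintro u ⟨hu1, hu2⟩
          exact hgap u hu2 ⟨by linarith [hu1.1], by linarith [hu1.2]⟩) (by
          rintro ⟨s, hs⟩ ⟨t, ht⟩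
          rcases hchain.total hs ht with h | h
          · exact ⟨⟨s, hs⟩, subset_rfl, h⟩
          · exact ⟨⟨t, ht⟩, h, subset_rfl⟩)
      dsimp only at hGe
      obtain ⟨hGI, hGc, hG0, hG1, hGg⟩ := hc hG
      have ha' : a ∈ G := ha G hG
      have hb' : b ∈ G := hb G hG
      obtain ⟨u, ⟨huG, hu1, hu2⟩, humax⟩ :=
        ((isCompact_Icc (a := a) (b := a + η)).inter_left hGc).exists_isGreatest
          ⟨a, ha', le_rfl, by linarith⟩
      obtain ⟨v, ⟨hvG, hv1, hv2⟩, hvmin⟩ :=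
        ((isCompact_Icc (a := b - η) (b := b)).inter_left hGc).exists_isLeast
          ⟨b, hb', by linarith, le_rfl⟩
      have huv : γ u = γ v := by
        refine hGg u huG v hvG (by linarith) ?_
        rintro w hw ⟨hw1, hw2⟩
        by_cases h : w ≤ a + η
        · have := humax ⟨hw, by linarith, h⟩
          linarith
        by_cases h' : b - η ≤ w
        · have := hvmin ⟨hw, h', by linarith⟩
          linarith
        have : w ∈ Icc (a + η) (b - η) ∩ G := ⟨⟨by linarith, by linarith⟩, hw⟩
        rw [hGe] at this
        exact this
      have e1 := h1 u (by rw [Real.dist_eq, abs_lt]; constructor <;> linarith)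
      have e2 := h2 v (by rw [Real.dist_eq, abs_lt]; constructor <;> linarith)
      rw [huv] at e1
      have := dist_triangle_left (γ a) (γ b) (γ v)
      linarith
  · refine ⟨subset_rfl, isClosed_Icc, by simp, by simp, ?_⟩
    intro a ha b hb hab h
    exact absurd ⟨by linarith, by linarith⟩
      (h ((a + b) / 2) ⟨by linarith [ha.1, hb.1], by linarith [ha.2, hb.2]⟩)

theorem gap_of_minimal {X : Type*} {γ : ℝ → X} {F : Set ℝ} (hF : Minimal (· ∈ GapSets γ) F)
    {s t : ℝ} (hs : s ∈ F) (ht : t ∈ F) (hst : s < t) (he : γ s = γ t) :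
    ∀ c ∈ F, ¬ (s < c ∧ c < t) := by
  obtain ⟨hFI, hFc, hF0, hF1, hFg⟩ := hF.prop
  have hmem : F \ Ioo s t ∈ GapSets γ := by
    refine ⟨diff_subset.trans hFI, ?_, ⟨hF0, fun h => ?_⟩, ⟨hF1, fun h => ?_⟩, ?_⟩
    · rw [diff_eq]
      exact hFc.inter isOpen_Ioo.isClosed_compl
    · linarith [(hFI hs).1, h.1]
    · linarith [(hFI ht).2, h.2]
    · rintro a ⟨ha, ha'⟩ b ⟨hb, hb'⟩ hab hgap
      by_cases h : ∀ c ∈ F, ¬ (a < c ∧ c < b)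
      · exact hFg a ha b hb hab h
      · push Not at h
        obtain ⟨c, hc, hac, hcb⟩ := h
        have hcm : c ∈ Ioo s t := by
          by_contra hcm
          exact hgap c ⟨hc, hcm⟩ ⟨hac, hcb⟩
        have h1 : a = s := by
          refine le_antisymm ?_ ?_
          · by_contra h
            exact ha' ⟨not_le.1 h, by linarith [hcm.2]⟩
          · by_contra h
            exact hgap s ⟨hs, fun h => lt_irrefl _ h.1⟩ ⟨not_le.1 h, by linarith [hcm.1]⟩
        have h2 : b = t := by
          refine le_antisymm ?_ ?_
          · by_contra h
            exact hgap t ⟨ht, fun h => lt_irrefl _ h.2⟩ ⟨by linarith [hcm.2], not_le.1 h⟩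
          · by_contra h
            exact hb' ⟨by linarith [hcm.1], not_le.1 h⟩
        rw [h1, h2, he]
  intro c hc hcst
  exact (hF.le_of_le hmem diff_subset hc).2 hcst

/-- The diameter of the part of the curve over `F ∩ [q, t]`. -/
noncomputable def partDiam {X : Type*} [MetricSpace X] (γ : ℝ → X) (F : Set ℝ) (q t : ℝ) : ℝ :=
  Metric.diam (γ '' (F ∩ Icc q t))

theorem partDiam_mono {X : Type*} [MetricSpace X] [CompactSpace X] (γ : ℝ → X) (F : Set ℝ) (q : ℝ)
    {s t : ℝ} (h : s ≤ t) : partDiam γ F q s ≤ partDiam γ F q t :=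
  Metric.diam_mono (image_mono (inter_subset_inter_right _ (Icc_subset_Icc_right h)))
    (Metric.isBounded_of_compactSpace)

theorem partDiam_zero {X : Type*} [MetricSpace X] (γ : ℝ → X) (F : Set ℝ) {q t : ℝ}
    (h : t ≤ q) : partDiam γ F q t = 0 := by
  refine Metric.diam_subsingleton (Subsingleton.image ?_ _)
  rintro u ⟨-, hu1, hu2⟩ v ⟨-, hv1, hv2⟩
  linarith

theorem partDiam_add {X : Type*} [MetricSpace X] [CompactSpace X] (γ : ℝ → X) (F : Set ℝ) (q : ℝ)
    {s t ε : ℝ} (hs : s ∈ F) (hε : 0 ≤ ε)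
    (hd : ∀ u ∈ F, s ≤ u → u ≤ t → dist (γ u) (γ s) ≤ ε) :
    partDiam γ F q t ≤ partDiam γ F q s + 2 * ε := by
  have h0 : 0 ≤ partDiam γ F q s := Metric.diam_nonneg
  refine Metric.diam_le_of_forall_dist_le (by linarith) ?_
  rintro _ ⟨u, ⟨huF, hu1, hu2⟩, rfl⟩ _ ⟨v, ⟨hvF, hv1, hv2⟩, rfl⟩
  by_cases hq : s < q
  · have e1 := hd u huF (by linarith) hu2
    have e2 := hd v hvF (by linarith) hv2
    have := dist_triangle_right (γ u) (γ v) (γ s)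
    linarith
  · push Not at hq
    have near : ∀ w ∈ F, q ≤ w → w ≤ t → ∃ w' ∈ F ∩ Icc q s, dist (γ w) (γ w') ≤ ε := by
      intro w hw h1 h2
      rcases le_total w s with h | h
      · exact ⟨w, ⟨hw, h1, h⟩, by simpa using hε⟩
      · exact ⟨s, ⟨hs, hq, le_rfl⟩, hd w hw h h2⟩
    obtain ⟨u', hu', du⟩ := near u huF hu1 hu2
    obtain ⟨v', hv', dv⟩ := near v hvF hv1 hv2
    have h1 : dist (γ u') (γ v') ≤ partDiam γ F q s :=
      Metric.dist_le_diam_of_mem Metric.isBounded_of_compactSpace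
        (mem_image_of_mem _ hu') (mem_image_of_mem _ hv')
    have := dist_triangle4 (γ u) (γ u') (γ v') (γ v)
    rw [dist_comm (γ v') (γ v)] at this
    linarith

theorem partDiam_continuous {X : Type*} [MetricSpace X] [CompactSpace X] {γ : ℝ → X}
    (hγ : Continuous γ) {F : Set ℝ} (hF : F ⊆ Icc 0 1) (q : ℝ) :
    Continuous (fun t : F => partDiam γ F q t) := by
  have hu := isCompact_Icc.uniformContinuousOn_of_continuous (hγ.continuousOn (s := Icc (0:ℝ) 1))
  rw [Metric.uniformContinuousOn_iff] at hu
  rw [Metric.continuous_iff]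
  intro t ε hε
  obtain ⟨δ, hδ, h⟩ := hu (ε / 4) (by positivity)
  have step : ∀ s t : F, (s : ℝ) ≤ t → (t : ℝ) - s < δ →
      partDiam γ F q t ≤ partDiam γ F q s + 2 * (ε / 4) := by
    intro s t hst hd
    refine partDiam_add γ F q s.2 (by positivity) ?_
    intro u hu h1 h2
    refine (h u (hF hu) s (hF s.2) ?_).le
    rw [Real.dist_eq, abs_lt]
    constructor <;> linarith
  refine ⟨δ, hδ, fun s hs => ?_⟩
  rw [Subtype.dist_eq, Real.dist_eq, abs_lt] at hs
  rw [Real.dist_eq, abs_lt]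
  rcases le_total (s : ℝ) t with hst | hst
  · have h1 := step s t hst (by linarith)
    have h2 := partDiam_mono γ F q hst
    constructor <;> linarith
  · have h1 := step t s hst (by linarith)
    have h2 := partDiam_mono γ F q hst
    constructor <;> linarith

theorem exists_arc_of_curve {X : Type*} [MetricSpace X] [CompactSpace X] {γ : ℝ → X}
    (hγ : Continuous γ) (hne : γ 0 ≠ γ 1) : JoinedByArcIn (range γ) (γ 0) (γ 1) := by
  obtain ⟨F, hF⟩ := exists_minimal_gapSet hγ
  obtain ⟨hFI, hFc, hF0, hF1, hFg⟩ := hF.prop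
  obtain ⟨q, hq⟩ : ∃ q : ℕ → ℝ, DenseRange q := TopologicalSpace.exists_dense_seq ℝ
  let D := Metric.diam (univ : Set X)
  have hD : ∀ (q t : ℝ), partDiam γ F q t ≤ D := fun q t =>
    Metric.diam_mono (subset_univ _) Metric.isBounded_of_compactSpace
  have hnn : ∀ (q t : ℝ), 0 ≤ partDiam γ F q t := fun q t => Metric.diam_nonneg
  have hsumD : Summable (fun n : ℕ => (1 / 2 : ℝ) ^ n * D) := summable_geometric_two.mul_right D
  have hsum : ∀ t, Summable (fun n : ℕ => (1 / 2 : ℝ) ^ n * partDiam γ F (q n) t) := fun t =>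
    Summable.of_nonneg_of_le (fun n => mul_nonneg (by positivity) (hnn _ _))
      (fun n => mul_le_mul_of_nonneg_left (hD _ _) (by positivity)) hsumD
  let h : ℝ → ℝ := fun t => ∑' n : ℕ, (1 / 2 : ℝ) ^ n * partDiam γ F (q n) t
  have hcont : Continuous (fun t : F => h t) := by
    refine continuous_tsum (fun n => (partDiam_continuous hγ hFI (q n)).const_mul _) hsumD ?_
    intro n t
    rw [Real.norm_of_nonneg (mul_nonneg (by positivity) (hnn _ _))]
    exact mul_le_mul_of_nonneg_left (hD _ _) (by positivity)
  have hmono : ∀ s t, s ≤ t → h s ≤ h t := fun s t hst =>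
    (hsum s).tsum_le_tsum
      (fun n => mul_le_mul_of_nonneg_left (partDiam_mono γ F _ hst) (by positivity)) (hsum t)
  have heq : ∀ s ∈ F, ∀ t ∈ F, s < t → γ s = γ t → h s = h t := by
    intro s hs t ht hst he
    refine tsum_congr fun n => ?_
    congr 1
    refine le_antisymm (partDiam_mono γ F _ hst.le) ?_
    have := partDiam_add γ F (q n) (t := t) hs le_rfl ?_
    · simpa using this
    · intro u hu h1 h2
      have := gap_of_minimal hF hs ht hst he u hu
      rcases h1.eq_or_lt with h | h
      · rw [h, dist_self]
      · rcases h2.eq_or_lt with h' | h'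
        · rw [h', he, dist_self]
        · exact absurd ⟨h, h'⟩ this
  have hbetween : ∀ s ∈ F, ∀ t ∈ F, s < t → γ s ≠ γ t → ∃ u ∈ F, s < u ∧ u < t := by
    intro s hs t ht hst he
    by_contra hcon
    push Not at hcon
    exact he (hFg s hs t ht hst fun c hc hh => absurd hh.2 (not_lt.2 (hcon c hc hh.1)))
  have hlt : ∀ s ∈ F, ∀ t ∈ F, s < t → γ s ≠ γ t → h s < h t := by
    intro s hs t ht hst he
    obtain ⟨u, huF, hsu, hut, hu⟩ : ∃ u ∈ F, s < u ∧ u < t ∧ γ u ≠ γ t := by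
      obtain ⟨u, huF, hsu, hut⟩ := hbetween s hs t ht hst he
      by_cases hu : γ u = γ t
      · obtain ⟨v, hvF, hsv, hvu⟩ := hbetween s hs u huF hsu (by rw [hu]; exact he)
        refine ⟨v, hvF, hsv, by linarith, fun hv => ?_⟩
        exact gap_of_minimal hF hvF ht (by linarith) hv u huF ⟨hvu, hut⟩
      · exact ⟨u, huF, hsu, hut, hu⟩
    obtain ⟨n, hn⟩ := hq.exists_mem_open isOpen_Ioo (nonempty_Ioo.2 hsu)
    refine Summable.tsum_lt_tsum (i := n)
      (fun n => mul_le_mul_of_nonneg_left (partDiam_mono γ F _ hst.le) (by positivity))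
      ?_ (hsum s) (hsum t)
    refine mul_lt_mul_of_pos_left ?_ (by positivity)
    rw [partDiam_zero γ F hn.1.le]
    refine lt_of_lt_of_le (dist_pos.2 hu) (Metric.dist_le_diam_of_mem
      Metric.isBounded_of_compactSpace (mem_image_of_mem _ ⟨huF, hn.2.le, hut.le⟩)
      (mem_image_of_mem _ ⟨ht, by linarith [hn.2], le_rfl⟩))
  have hiff : ∀ s ∈ F, ∀ t ∈ F, (h s = h t ↔ γ s = γ t) := by
    intro s hs t ht
    rcases lt_trichotomy s t with hst | hst | hst
    · refine ⟨fun hh => ?_, heq s hs t ht hst⟩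
      by_contra hne
      exact (hlt s hs t ht hst hne).ne hh
    · simp [hst]
    · refine ⟨fun hh => ?_, fun hh => (heq t ht s hs hst hh.symm).symm⟩
      by_contra hne
      exact (hlt t ht s hs hst (Ne.symm hne)).ne hh.symm
  have h01 : h 0 < h 1 := hlt 0 hF0 1 hF1 one_pos hne
  have hFcomp : IsCompact F := isCompact_Icc.of_isClosed_subset hFc hFI
  have hcOn : ContinuousOn h F := continuousOn_iff_continuous_restrict.2 hcont
  have hsurj : ∀ y ∈ Icc (h 0) (h 1), ∃ s ∈ F, h s = y := by
    intro y hy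
    by_contra hcon
    push Not at hcon
    have c1 : IsCompact (F ∩ h ⁻¹' Iic y) :=
      hFcomp.of_isClosed_subset (hcOn.preimage_isClosed_of_isClosed hFc isClosed_Iic)
        inter_subset_left
    have c2 : IsCompact (F ∩ h ⁻¹' Ici y) :=
      hFcomp.of_isClosed_subset (hcOn.preimage_isClosed_of_isClosed hFc isClosed_Ici)
        inter_subset_left
    obtain ⟨u, ⟨huF, hu⟩, humax⟩ := c1.exists_isGreatest ⟨0, hF0, hy.1⟩
    obtain ⟨v, ⟨hvF, hv⟩, hvmin⟩ := c2.exists_isLeast ⟨1, hF1, hy.2⟩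
    have hu' : h u < y := lt_of_le_of_ne hu (hcon u huF)
    have hv' : y < h v := lt_of_le_of_ne hv (Ne.symm (hcon v hvF))
    have huv : u < v := by
      by_contra hh
      have := hmono v u (not_lt.1 hh)
      linarith
    have : γ u = γ v := by
      refine hFg u huF v hvF huv ?_
      rintro c hc ⟨hc1, hc2⟩
      rcases le_total (h c) y with hh | hh
      · exact absurd (humax ⟨hc, hh⟩) (not_le.2 hc1)
      · exact absurd (hvmin ⟨hc, hh⟩) (not_le.2 hc2)
    have := (hiff u huF v hvF).2 this
    linarith
  have hpos : 0 < h 1 - h 0 := by linarith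
  have hHmem : ∀ t : F, (h t - h 0) / (h 1 - h 0) ∈ Icc (0 : ℝ) 1 := by
    intro t
    have h1 := hmono 0 t (hFI t.2).1
    have h2 := hmono t 1 (hFI t.2).2
    refine ⟨div_nonneg (by linarith) hpos.le, ?_⟩
    rw [div_le_one hpos]
    linarith
  let H : F → unitInterval := fun t => ⟨(h t - h 0) / (h 1 - h 0), hHmem t⟩
  have hHc : Continuous H := by
    refine Continuous.subtype_mk ?_ _
    exact (hcont.sub continuous_const).div_const _
  have hHs : Function.Surjective H := by
    intro y
    obtain ⟨s, hs, hsy⟩ := hsurj (h 0 + y * (h 1 - h 0))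
      ⟨by nlinarith [y.2.1], by nlinarith [y.2.2]⟩
    refine ⟨⟨s, hs⟩, Subtype.ext ?_⟩
    show (h s - h 0) / (h 1 - h 0) = y
    rw [hsy]
    field_simp
    ring
  have hHiff : ∀ s t : F, H s = H t ↔ γ s = γ t := by
    intro s t
    rw [← hiff s s.2 t t.2, Subtype.ext_iff]
    show (h s - h 0) / (h 1 - h 0) = (h t - h 0) / (h 1 - h 0) ↔ _
    rw [div_left_inj' hpos.ne', sub_left_inj]
  have : CompactSpace F := isCompact_iff_compactSpace.1 hFcomp
  have hquot : IsQuotientMap H := hHc.isClosedMap.isQuotientMap hHc hHs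
  choose σ hσ using hHs
  have hα : ∀ s : F, γ (σ (H s)) = γ s := fun s => (hHiff _ _).1 (hσ _)
  have H0 : H ⟨0, hF0⟩ = 0 := Subtype.ext (by show (h 0 - h 0) / (h 1 - h 0) = 0; simp)
  have H1 : H ⟨1, hF1⟩ = 1 := Subtype.ext (by
    show (h 1 - h 0) / (h 1 - h 0) = 1
    exact div_self hpos.ne')
  refine ⟨fun u => γ (σ u), ?_, ?_, ?_, ?_, ?_⟩
  · rw [hquot.continuous_iff]
    have : (fun u => γ (σ u)) ∘ H = fun s : F => γ s := funext hα
    rw [this]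
    exact hγ.comp continuous_subtype_val
  · intro u v huv
    have := (hHiff (σ u) (σ v)).2 huv
    rwa [hσ, hσ] at this
  · have := hα ⟨0, hF0⟩
    rwa [H0] at this
  · have := hα ⟨1, hF1⟩
    rwa [H1] at this
  · rintro _ ⟨u, rfl⟩
    exact mem_range_self _

/-- Every compact, locally connected metric space is locally arcwise connected. -/
theorem locally_arcwise_connected {X : Type*} [MetricSpace X] [CompactSpace X]
    [LocallyConnectedSpace X] (p : X) (U : Set X) (hU : U ∈ nhds p) :
    ∃ V ∈ nhds p, V ⊆ U ∧ ∀ x ∈ V, ∀ y ∈ V, x ≠ y → JoinedByArcIn V x y := by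
  have := locPath_of_locConn X
  refine ⟨pathComponentIn U p, pathComponentIn_mem_nhds hU, pathComponentIn_subset, ?_⟩
  intro x hx y hy hxy
  have hpc : IsPathConnected (pathComponentIn U p) :=
    isPathConnected_pathComponentIn (mem_of_mem_nhds hU)
  obtain ⟨γ, hγ⟩ := hpc.joinedIn x hx y hy
  have h := exists_arc_of_curve (γ := γ.extend) γ.continuous_extend
    (by rw [γ.extend_zero, γ.extend_one]; exact hxy)
  rw [γ.extend_zero, γ.extend_one, γ.extend_range] at h
  obtain ⟨α, h1, h2, h3, h4, h5⟩ := h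
  exact ⟨α, h1, h2, h3, h4, h5.trans (range_subset_iff.2 hγ)⟩
end

section
/- Every compact metric space X that is connected and locally connected is arcwise connected: any two distinct points of X are joined by an arc in X. -/
open Function Set Topology

/-- Points of a preconnected set are joined by finite chains with small steps. -/
lemma exists_small_chain {X : Type*} [MetricSpace X] {C : Set X} (hC : IsPreconnected C)
    {δ : ℝ} (hδ : 0 < δ) {p q : X} (hp : p ∈ C) (hq : q ∈ C) :
    ∃ (N : ℕ) (c : ℕ → X), c 0 = p ∧ (∀ j, N ≤ j → c j = q) ∧ (∀ j, c j ∈ C) ∧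
      ∀ j, dist (c j) (c (j + 1)) < δ := by
  have key : ∀ x ∈ C, ∀ y ∈ C, dist x y < δ →
      ∃ (N : ℕ) (c : ℕ → X), c 0 = x ∧ (∀ j, N ≤ j → c j = y) ∧ (∀ j, c j ∈ C) ∧
      ∀ j, dist (c j) (c (j + 1)) < δ := by
    intro x hx y hy hxy
    refine ⟨1, fun j => if j = 0 then x else y, by simp, ?_, ?_, ?_⟩
    · intro j hj
      have : j ≠ 0 := by omega
      simp [this]
    · intro j
      dsimp only
      split_ifs <;> assumption
    · intro j
      by_cases h : j = 0
      · simp [h, hxy]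
      · simp [h, hδ]
  refine hC.induction₂' (fun p q => ∃ (N : ℕ) (c : ℕ → X), c 0 = p ∧ (∀ j, N ≤ j → c j = q) ∧
      (∀ j, c j ∈ C) ∧ ∀ j, dist (c j) (c (j + 1)) < δ) ?_ ?_ hp hq
  · intro x hx
    have h1 : ∀ᶠ y in 𝓝[C] x, dist y x < δ :=
      mem_nhdsWithin_of_mem_nhds (Metric.ball_mem_nhds x hδ)
    filter_upwards [h1, self_mem_nhdsWithin] with y hy hyC
    exact ⟨key x hx y hyC (by rwa [dist_comm]), key y hyC x hx hy⟩
  · rintro x y z hx hy hz ⟨N, c, h0, hN, hc, hd⟩ ⟨M, e, e0, eM, ec, ed⟩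
    refine ⟨N + M, fun j => if j < N then c j else e (j - N), ?_, ?_, ?_, ?_⟩
    · by_cases h : 0 < N
      · simp [h, h0]
      · have : N = 0 := by omega
        subst this
        simp only [lt_irrefl, if_false, Nat.sub_self]
        rw [e0, ← h0, hN 0 le_rfl]
    · intro j hj
      have : ¬ j < N := by omega
      simp only [this, if_false]
      exact eM _ (by omega)
    · intro j
      dsimp only
      split_ifs
      · exact hc j
      · exact ec _
    · intro j
      dsimp only
      by_cases h : j + 1 < N
      · rw [if_pos h, if_pos (by omega)]
        exact hd j
      · by_cases h' : j < N
        · rw [if_neg h, if_pos h']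
          have h2 : j + 1 - N = 0 := by omega
          rw [h2, e0, ← hN (j + 1) (by omega)]
          exact hd j
        · rw [if_neg h, if_neg h']
          have h2 : j + 1 - N = (j - N) + 1 := by omega
          rw [h2]
          exact ed _

/-- Uniform local connectedness. -/
lemma exists_unif_conn {X : Type*} [MetricSpace X] [CompactSpace X]
    [LocallyConnectedSpace X] {ε : ℝ} (hε : 0 < ε) :
    ∃ δ > 0, ∀ p q : X, dist p q < δ →
      ∃ C : Set X, IsPreconnected C ∧ p ∈ C ∧ q ∈ C ∧ ∀ z ∈ C, dist z p < ε := by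
  have h := locallyConnectedSpace_iff_subsets_isOpen_isConnected.1 
    (inferInstance : LocallyConnectedSpace X)
  choose V hV hVo hVm hVc using fun x : X => h x _ (Metric.ball_mem_nhds x (half_pos hε))
  obtain ⟨δ, hδ, hb⟩ := lebesgue_number_lemma_of_metric (isCompact_univ (X := X)) hVo
    (fun x _ => mem_iUnion.2 ⟨x, hVm x⟩)
  refine ⟨δ, hδ, fun p q hpq => ?_⟩
  obtain ⟨i, hi⟩ := hb p (mem_univ _)
  have hp : p ∈ V i := hi (Metric.mem_ball_self hδ)
  refine ⟨V i, (hVc i).isPreconnected, hp, hi (by rwa [Metric.mem_ball, dist_comm]), ?_⟩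
  intro z hz
  have h1 := Metric.mem_ball.1 (hV i hz)
  have h2 := Metric.mem_ball.1 (hV i hp)
  have h3 := dist_triangle_right z p i
  linarith

/-- Refinement of a chain. -/
lemma refine_chain {X : Type*} [MetricSpace X] {ε δ δ' : ℝ} (hε : 0 < ε) (hδ' : 0 < δ')
    (hconn : ∀ p q : X, dist p q < δ →
      ∃ C : Set X, IsPreconnected C ∧ p ∈ C ∧ q ∈ C ∧ ∀ z ∈ C, dist z p < ε)
    (y : X) (L : ℕ) (h : ℕ → X) (hL : ∀ m, L ≤ m → h m = y)
    (hd : ∀ m, dist (h m) (h (m + 1)) < δ) :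
    ∃ (N : ℕ) (g : ℕ → X), 0 < N ∧ g 0 = h 0 ∧ (∀ m, L * N ≤ m → g m = y) ∧
      (∀ m, dist (g m) (g (m + 1)) < δ') ∧ ∀ m, dist (g m) (h (m / N)) < ε := by
  choose C hC hp hq hCd using fun i => hconn (h i) (h (i + 1)) (hd i)
  choose n c c0 cN cC cd using fun i => exists_small_chain (hC i) hδ' (hp i) (hq i)
  set N := (Finset.range L).sup n + 1 with hN
  have hN0 : 0 < N := by omega
  have hnN : ∀ i < L, n i ≤ N := fun i hi =>
    (Finset.le_sup (f := n) (Finset.mem_range.2 hi)).trans (by omega)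
  have hlt : ∀ m, m / N < L ↔ m < L * N := fun m => Nat.div_lt_iff_lt_mul hN0
  refine ⟨N, fun m => if m / N < L then c (m / N) (m % N) else y, hN0, ?_, ?_, ?_, ?_⟩
  · simp only [Nat.zero_div, Nat.zero_mod]
    split_ifs with h0
    · exact c0 0
    · exact (hL 0 (by omega)).symm
  · intro m hm
    have : ¬ m / N < L := by rw [hlt]; omega
    simp [this]
  · intro m
    dsimp only
    by_cases hm : m / N < L
    · rw [if_pos hm]
      by_cases hr : m % N + 1 < N
      · have h1 : (m + 1) / N = m / N := by
          rw [Nat.div_eq_iff hN0]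
          have := Nat.div_add_mod m N
          have h3 : m / N * N = N * (m / N) := mul_comm _ _
          constructor <;> omega
        have h2 : (m + 1) % N = m % N + 1 := by
          rw [Nat.add_mod, Nat.mod_eq_of_lt (a := 1) (by omega), Nat.mod_eq_of_lt hr]
        rw [h1, h2, if_pos hm]
        exact cd _ _
      · have hr' : m % N + 1 = N := by
          have := Nat.mod_lt m hN0
          omega
        have h0 : m + 1 = (m / N + 1) * N := by
          have := Nat.div_add_mod m N
          have h3 : (m / N + 1) * N = N * (m / N) + N := by ring
          omega
        have h1 : (m + 1) / N = m / N + 1 := by rw [h0, Nat.mul_div_cancel _ hN0]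
        have h2 : (m + 1) % N = 0 := by rw [h0, Nat.mul_mod_left]
        have h4 : c (m / N) (m % N + 1) = h (m / N + 1) := cN _ _ (by rw [hr']; exact hnN _ hm)
        have h5 := cd (m / N) (m % N)
        rw [h4] at h5
        rw [h1, h2]
        split_ifs with h6
        · rw [c0]; exact h5
        · rw [← hL (m / N + 1) (by omega)]; exact h5
    · have : ¬ (m + 1) / N < L := by
        have := Nat.div_le_div_right (c := N) (Nat.le_succ m)
        simp only [Nat.succ_eq_add_one] at this
        omega
      rw [if_neg hm, if_neg this, dist_self]
      exact hδ'
  · intro m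
    dsimp only
    split_ifs with hm
    · exact hCd _ _ (cC _ _)
    · rw [hL _ (by omega), dist_self]
      exact hε

/-- A compact connected locally connected metric space is path connected. -/
lemma exists_path_of_compact {X : Type*} [MetricSpace X] [CompactSpace X]
    [ConnectedSpace X] [LocallyConnectedSpace X] (x y : X) :
    ∃ γ : unitInterval → X, Continuous γ ∧ γ 0 = x ∧ γ 1 = y := by
  have hU : ∀ k : ℕ, ∃ δ > 0, δ ≤ (1 / 2 : ℝ) ^ k ∧ ∀ p q : X, dist p q < δ →
      ∃ C : Set X, IsPreconnected C ∧ p ∈ C ∧ q ∈ C ∧ ∀ z ∈ C, dist z p < (1 / 2 : ℝ) ^ k := by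
    intro k
    obtain ⟨δ, hδ, h⟩ := exists_unif_conn (X := X) (ε := (1 / 2 : ℝ) ^ k) (by positivity)
    exact ⟨min δ ((1 / 2 : ℝ) ^ k), by positivity, min_le_right _ _,
      fun p q hpq => h p q (hpq.trans_le (min_le_left _ _))⟩
  choose δ hδ hδle hconn using hU
  let S : ℕ → Type _ := fun k => {s : ℕ × (ℕ → X) // 0 < s.1 ∧ s.2 0 = x ∧
    (∀ m, s.1 ≤ m → s.2 m = y) ∧ ∀ m, dist (s.2 m) (s.2 (m + 1)) < δ k}
  have hS0 : Nonempty (S 0) := by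
    obtain ⟨N, c, c0, cN, -, cd⟩ := exists_small_chain (X := X) isPreconnected_univ (hδ 0)
      (mem_univ x) (mem_univ y)
    exact ⟨⟨(N + 1, c), by simp, c0, fun m hm => cN m (by simp at hm; omega), cd⟩⟩
  have hstep : ∀ k (s : S k), ∃ s' : S (k + 1), ∃ N : ℕ, 0 < N ∧ s'.1.1 = s.1.1 * N ∧
      ∀ m, dist (s'.1.2 m) (s.1.2 (m / N)) < (1 / 2 : ℝ) ^ k := by
    rintro k ⟨⟨L, h⟩, hL0, h0, hL, hd⟩
    obtain ⟨N, g, hN, g0, gN, gd, gh⟩ := refine_chain (by positivity) (hδ (k + 1)) (hconn k)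
      y L h hL hd
    exact ⟨⟨(L * N, g), Nat.mul_pos hL0 hN, g0.trans h0, gN, gd⟩, N, hN, rfl, gh⟩
  choose nxt N hN hNL hnd using hstep
  let s : ∀ k, S k := fun k => Nat.rec (Classical.choice hS0) (fun k s => nxt k s) k
  have hs : ∀ k, s (k + 1) = nxt k (s k) := fun k => rfl
  let f : ℕ → unitInterval → X := fun k t => (s k).1.2 ⌊(t : ℝ) * ((s k).1.1 : ℝ)⌋₊
  have hf : ∀ t k, dist (f k t) (f (k + 1) t) ≤ 1 * (1 / 2 : ℝ) ^ k := by
    intro t k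
    have h1 := hnd k (s k) ⌊(t : ℝ) * ((s (k + 1)).1.1 : ℝ)⌋₊
    have h2 : ⌊(t : ℝ) * ((s (k + 1)).1.1 : ℝ)⌋₊ / N k (s k) = ⌊(t : ℝ) * ((s k).1.1 : ℝ)⌋₊ := by
      rw [← Nat.floor_div_natCast, hs, hNL]
      congr 1
      have : (N k (s k) : ℝ) ≠ 0 := by exact_mod_cast (hN k (s k)).ne'
      push_cast
      field_simp
    rw [h2] at h1
    rw [dist_comm, one_mul]
    exact h1.le
  choose F hF using fun t => cauchySeq_tendsto_of_complete
    (cauchySeq_of_le_geometric (1 / 2 : ℝ) 1 (by norm_num) (hf t))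
  have hFd : ∀ t k, dist (f k t) (F t) ≤ 2 * (1 / 2 : ℝ) ^ k := by
    intro t k
    have := dist_le_of_le_geometric_of_tendsto (1 / 2 : ℝ) 1 (by norm_num) (hf t) (hF t) k
    rw [one_mul, show (1 - 1 / 2 : ℝ) = 1 / 2 by norm_num] at this
    linarith
  refine ⟨F, ?_, ?_, ?_⟩
  · rw [Metric.continuous_iff]
    intro t ε hε
    obtain ⟨k, hk⟩ := exists_pow_lt_of_lt_one (show 0 < ε / 5 by positivity)
      (show (1 / 2 : ℝ) < 1 by norm_num)
    have hL : (0 : ℝ) < ((s k).1.1 : ℝ) := by exact_mod_cast (s k).2.1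
    refine ⟨1 / ((s k).1.1 : ℝ), by positivity, fun u hu => ?_⟩
    have hstep : ∀ a b : unitInterval, (a : ℝ) ≤ b → dist a b < 1 / ((s k).1.1 : ℝ) →
        dist (f k a) (f k b) ≤ (1 / 2 : ℝ) ^ k := by
      intro a b hab hd
      rw [Subtype.dist_eq, Real.dist_eq, abs_lt, lt_div_iff₀ hL] at hd
      have hd1 : (b : ℝ) * ((s k).1.1 : ℝ) < a * ((s k).1.1 : ℝ) + 1 := by
        have := hd.1
        rw [neg_lt, lt_div_iff₀ hL] at this
        linarith
      have h1 : ⌊(a : ℝ) * ((s k).1.1 : ℝ)⌋₊ ≤ ⌊(b : ℝ) * ((s k).1.1 : ℝ)⌋₊ :=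
        Nat.floor_le_floor (by gcongr)
      have h2 : ⌊(b : ℝ) * ((s k).1.1 : ℝ)⌋₊ ≤ ⌊(a : ℝ) * ((s k).1.1 : ℝ)⌋₊ + 1 := by
        rw [← Nat.floor_add_one (mul_nonneg a.2.1 hL.le)]
        exact Nat.floor_le_floor hd1.le
      dsimp only [f]
      rcases (show ⌊(b : ℝ) * ((s k).1.1 : ℝ)⌋₊ = ⌊(a : ℝ) * ((s k).1.1 : ℝ)⌋₊ ∨
        ⌊(b : ℝ) * ((s k).1.1 : ℝ)⌋₊ = ⌊(a : ℝ) * ((s k).1.1 : ℝ)⌋₊ + 1 by omega) with h | h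
      · rw [h, dist_self]; positivity
      · rw [h]
        exact ((s k).2.2.2.2 _).le.trans (hδle k)
    have h1 : dist (f k u) (f k t) ≤ (1 / 2 : ℝ) ^ k := by
      rcases le_total (u : ℝ) t with h | h
      · exact hstep u t h hu
      · rw [dist_comm]; exact hstep t u h (by rwa [dist_comm])
    have h2 := hFd u k
    have h3 := hFd t k
    have h4 := dist_triangle4 (F u) (f k u) (f k t) (F t)
    rw [dist_comm (F u) (f k u)] at h4
    linarith
  · refine tendsto_nhds_unique (hF 0) ?_
    have : ∀ k, f k 0 = x := fun k => by simp [f, (s k).2.2.1]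
    simp [this]
  · refine tendsto_nhds_unique (hF 1) ?_
    have : ∀ k, f k 1 = y := fun k => by
      simp only [f]
      apply (s k).2.2.2.1
      simp
    simp [this]

/-- Removal of loops by Zorn: a path can be replaced by a path with connected fibers. -/
lemma exists_monotone_path {X : Type*} [MetricSpace X] (γ : unitInterval → X)
    (hγ : Continuous γ) :
    ∃ β : unitInterval → X, Continuous β ∧ β 0 = γ 0 ∧ β 1 = γ 1 ∧
      ∀ s u t, s ≤ u → u ≤ t → β s = β t → β u = β s := by
  have hdist : ∀ a b s t : unitInterval, s ≤ a → a ≤ t → s ≤ b → b ≤ t →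
      dist a b ≤ dist s t := by
    intro a b s t h1 h2 h3 h4
    simp only [Subtype.dist_eq, Real.dist_eq]
    have h1' : (s : ℝ) ≤ a := h1
    have h2' : (a : ℝ) ≤ t := h2
    have h3' : (s : ℝ) ≤ b := h3
    have h4' : (b : ℝ) ≤ t := h4
    rw [abs_of_nonpos (show (s : ℝ) - t ≤ 0 by linarith), abs_le]
    constructor <;> linarith
  have huc : ∀ ε > 0, ∃ δ > 0, ∀ a b, dist a b < δ → dist (γ a) (γ b) < ε := by
    intro ε hε
    obtain ⟨δ, hδ, h⟩ := Metric.uniformContinuous_iff.1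
      (CompactSpace.uniformContinuous_of_continuous hγ) ε hε
    exact ⟨δ, hδ, fun a b hab => h hab⟩
  let S : Set (Set unitInterval) := {K | IsClosed K ∧ 0 ∈ K ∧ 1 ∈ K ∧
    ∀ a ∈ K, ∀ b ∈ K, a < b → Disjoint (Ioo a b) K → γ a = γ b}
  have huniv : (univ : Set unitInterval) ∈ S := by
    refine ⟨isClosed_univ, mem_univ _, mem_univ _, fun a _ b _ hab hd => ?_⟩
    obtain ⟨c, hc⟩ := exists_between hab
    exact absurd (mem_univ c) (disjoint_left.1 hd hc)
  obtain ⟨K, -, hK⟩ := zorn_superset_nonempty S (by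
    intro c hcS hc hne
    refine ⟨⋂₀ c, ⟨isClosed_sInter fun K hK => (hcS hK).1, fun K hK => (hcS hK).2.1,
      fun K hK => (hcS hK).2.2.1, ?_⟩, fun s hs => sInter_subset_of_mem hs⟩
    intro a ha b hb hab hdis
    by_contra hne'
    obtain ⟨δ, hδ, hδγ⟩ := huc (dist (γ a) (γ b) / 2) (half_pos (dist_pos.2 hne'))
    obtain ⟨m, ham, hmb⟩ := exists_between hab
    have hclose : ∃ a' b', a < a' ∧ a' < b' ∧ b' < b ∧ dist a a' < δ ∧ dist b' b < δ := by
      have h1 : ∀ᶠ u in 𝓝[>] a, dist u a < δ ∧ u < m := by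
        refine Filter.Eventually.and (mem_nhdsWithin_of_mem_nhds (Metric.ball_mem_nhds a hδ)) ?_
        exact mem_nhdsWithin_of_mem_nhds (Iio_mem_nhds ham)
      have h2 : ∀ᶠ u in 𝓝[<] b, dist u b < δ ∧ m < u := by
        refine Filter.Eventually.and (mem_nhdsWithin_of_mem_nhds (Metric.ball_mem_nhds b hδ)) ?_
        exact mem_nhdsWithin_of_mem_nhds (Ioi_mem_nhds hmb)
      have : (𝓝[>] a).NeBot := nhdsGT_neBot_of_exists_gt ⟨m, ham⟩
      have : (𝓝[<] b).NeBot := nhdsLT_neBot_of_exists_lt ⟨m, hmb⟩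
      obtain ⟨a', ha', ha''⟩ := (h1.and self_mem_nhdsWithin).exists
      obtain ⟨b', hb', hb''⟩ := (h2.and self_mem_nhdsWithin).exists
      exact ⟨a', b', ha'', ha'.2.trans hb'.2, hb'', by rw [dist_comm]; exact ha'.1, hb'.1⟩
    obtain ⟨a', b', haa', hab', hbb', hda, hdb⟩ := hclose
    have hex : ∃ K ∈ c, K ∩ Icc a' b' = ∅ := by
      by_contra hcon
      push Not at hcon
      have : Nonempty c := hne.to_subtype
      have := IsCompact.nonempty_iInter_of_directed_nonempty_isCompact_isClosed
        (fun K : c => K.1 ∩ Icc a' b') (by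
          rintro ⟨K₁, h₁⟩ ⟨K₂, h₂⟩
          rcases hc.total h₁ h₂ with h | h
          · exact ⟨⟨K₁, h₁⟩, Subset.rfl, inter_subset_inter_left _ h⟩
          · exact ⟨⟨K₂, h₂⟩, inter_subset_inter_left _ h, Subset.rfl⟩)
        (fun K => hcon K.1 K.2)
        (fun K => ((hcS K.2).1.inter isClosed_Icc).isCompact)
        (fun K => (hcS K.2).1.inter isClosed_Icc)
      obtain ⟨z, hz⟩ := this
      rw [mem_iInter] at hz
      have hzK : z ∈ ⋂₀ c := fun K hK => (hz ⟨K, hK⟩).1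
      have hzI := (hz (Classical.arbitrary c)).2
      exact disjoint_left.1 hdis ⟨haa'.trans_le hzI.1, hzI.2.trans_lt hbb'⟩ hzK
    obtain ⟨K, hKc, hKe⟩ := hex
    obtain ⟨hKcl, h0, h1, hgap⟩ := hcS hKc
    obtain ⟨p, ⟨hpK, hpa⟩, hpmax⟩ := (hKcl.inter (isClosed_Icc (a := a) (b := a'))).isCompact.exists_isGreatest
      ⟨a, ha K hKc, le_rfl, haa'.le⟩
    obtain ⟨q, ⟨hqK, hqb⟩, hqmin⟩ := (hKcl.inter (isClosed_Icc (a := b') (b := b))).isCompact.exists_isLeast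
      ⟨b, hb K hKc, hbb'.le, le_rfl⟩
    have hpq : γ p = γ q := by
      refine hgap p hpK q hqK (hpa.2.trans_lt (hab'.trans_le hqb.1)) ?_
      rw [disjoint_left]
      rintro z ⟨hz1, hz2⟩ hzK
      rcases le_total z a' with h | h
      · exact absurd (hpmax ⟨hzK, hpa.1.trans hz1.le, h⟩) (not_le.2 hz1)
      · rcases le_total z b' with h' | h'
        · have : z ∈ K ∩ Icc a' b' := ⟨hzK, h, h'⟩
          rw [hKe] at this
          exact this
        · exact absurd (hqmin ⟨hzK, h', hz2.le.trans hqb.2⟩) (not_le.2 hz2)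
    have e1 := hδγ a p ((hdist a p a a' le_rfl haa'.le hpa.1 hpa.2).trans_lt hda)
    have e2 := hδγ q b ((hdist q b b' b hqb.1 hqb.2 hbb'.le le_rfl).trans_lt hdb)
    have e3 := dist_triangle (γ a) (γ p) (γ b)
    rw [hpq] at e3 e1
    linarith) univ huniv
  obtain ⟨⟨hKcl, h0, h1, hgap⟩, hmin⟩ := hK
  have hmin' : ∀ s ∈ K, ∀ t ∈ K, γ s = γ t → ∀ u ∈ K, s < u → u < t → False := by
    intro s hs t ht hst u hu hsu hut
    have hmem : K \ Ioo s t ∈ S := by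
      refine ⟨hKcl.sdiff isOpen_Ioo, ⟨h0, fun h => not_lt.2 (show 0 ≤ s from unitInterval.nonneg') h.1⟩,
        ⟨h1, fun h => not_lt.2 (show t ≤ 1 from unitInterval.le_one') h.2⟩, ?_⟩
      rintro a ⟨haK, ha⟩ b ⟨hbK, hb⟩ hab hdis
      have hs' : s ∈ K \ Ioo s t := ⟨hs, fun h => lt_irrefl _ h.1⟩
      have ht' : t ∈ K \ Ioo s t := ⟨ht, fun h => lt_irrefl _ h.2⟩
      have hst' : s < t := hsu.trans hut
      by_cases hd : Disjoint (Ioo a b) K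
      · exact hgap a haK b hbK hab hd
      · rw [not_disjoint_iff] at hd
        obtain ⟨z, hz, hzK⟩ := hd
        have hzst : z ∈ Ioo s t := by
          by_contra hcon
          exact disjoint_left.1 hdis hz ⟨hzK, hcon⟩
        have has : a ≤ s := by
          by_contra hcon
          exact ha ⟨not_le.1 hcon, hz.1.trans hzst.2⟩
        have hbt : t ≤ b := by
          by_contra hcon
          exact hb ⟨hzst.1.trans hz.2, not_le.1 hcon⟩
        have has' : a = s := by
          refine has.antisymm (not_lt.1 fun hcon => ?_)
          exact disjoint_left.1 hdis ⟨hcon, hst'.trans_le hbt⟩ hs'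
        have hbt' : b = t := by
          refine (hbt.antisymm (not_lt.1 fun hcon => ?_)).symm
          exact disjoint_left.1 hdis ⟨has.trans_lt hst', hcon⟩ ht'
        rw [has', hbt', hst]
    have := hmin hmem sdiff_subset hu
    exact this.2 ⟨hsu, hut⟩
  choose σ hσ using fun t : unitInterval =>
    (hKcl.inter (isClosed_Iic (a := t))).isCompact.exists_isGreatest
      ⟨0, h0, (unitInterval.nonneg' : (0 : unitInterval) ≤ t)⟩
  have hσK : ∀ t, σ t ∈ K := fun t => (hσ t).1.1
  have hσle : ∀ t, σ t ≤ t := fun t => (hσ t).1.2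
  have hσmax : ∀ t, ∀ z ∈ K, z ≤ t → z ≤ σ t := fun t z hz hzt => (hσ t).2 ⟨hz, hzt⟩
  have hσmono : ∀ s t, s ≤ t → σ s ≤ σ t := fun s t hst =>
    hσmax t _ (hσK s) ((hσle s).trans hst)
  have hσid : ∀ t ∈ K, σ t = t := fun t ht => (hσle t).antisymm (hσmax t t ht le_rfl)
  refine ⟨fun t => γ (σ t), ?_, by simp only [hσid 0 h0], by simp only [hσid 1 h1], ?_⟩
  · have hest : ∀ s t, s ≤ t → γ (σ s) = γ (σ t) ∨
        ∃ a b, s ≤ a ∧ a ≤ t ∧ s ≤ b ∧ b ≤ t ∧ γ (σ s) = γ a ∧ γ (σ t) = γ b := by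
      intro s t hst
      by_cases hne : (K ∩ Icc s t).Nonempty
      · right
        obtain ⟨q, ⟨hqK, hqs⟩, hqmin⟩ := (hKcl.inter isClosed_Icc).isCompact.exists_isLeast hne
        refine ⟨q, σ t, hqs.1, hqs.2, hqs.1.trans (hσmax t q hqK hqs.2), hσle t, ?_, rfl⟩
        rcases (((hσle s).trans hqs.1).eq_or_lt) with h | h
        · rw [h]
        · refine hgap _ (hσK s) q hqK h ?_
          rw [disjoint_left]
          rintro z ⟨hz1, hz2⟩ hzK
          rcases le_total z s with h' | h'
          · exact absurd (hσmax s z hzK h') (not_le.2 hz1)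
          · exact absurd (hqmin ⟨hzK, h', hz2.le.trans hqs.2⟩) (not_le.2 hz2)
      · left
        congr 1
        refine (hσmono s t hst).antisymm (hσmax s _ (hσK t) ?_)
        by_contra hcon
        exact hne ⟨σ t, hσK t, (not_le.1 hcon).le, hσle t⟩
    rw [Metric.continuous_iff]
    intro t ε hε
    obtain ⟨δ, hδ, hδγ⟩ := huc ε hε
    have hmain : ∀ s t, s ≤ t → dist s t < δ → dist (γ (σ s)) (γ (σ t)) < ε := by
      intro s t hst hd
      rcases hest s t hst with h | ⟨a, b, h1, h2, h3, h4, h5, h6⟩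
      · rw [h, dist_self]; exact hε
      · rw [h5, h6]
        exact hδγ a b ((hdist a b s t h1 h2 h3 h4).trans_lt hd)
    refine ⟨δ, hδ, fun u hu => ?_⟩
    rcases le_total u t with h | h
    · exact hmain u t h hu
    · rw [dist_comm]; exact hmain t u h (by rwa [dist_comm])
  · intro s u t hsu hut hst
    dsimp only at hst ⊢
    rcases (hσmono s u hsu).eq_or_lt with h | h
    · rw [h]
    · rcases (hσmono u t hut).eq_or_lt with h' | h'
      · rw [h', hst]
      · exact (hmin' _ (hσK s) _ (hσK t) hst _ (hσK u) h h').elim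

/-- A nonconstant path with connected fibers can be reparametrised to an arc. -/
lemma exists_arc_of_monotone_path {X : Type*} [MetricSpace X] [CompactSpace X]
    (β : unitInterval → X) (hβ : Continuous β) (h01 : β 0 ≠ β 1)
    (hmono : ∀ s u t, s ≤ u → u ≤ t → β s = β t → β u = β s) :
    ∃ α : unitInterval → X, Continuous α ∧ Function.Injective α ∧ α 0 = β 0 ∧ α 1 = β 1 := by
  have hbd : ∀ A : Set X, Bornology.IsBounded A := fun A => Bornology.IsBounded.all A
  let D : unitInterval → unitInterval → ℝ := fun r t => Metric.diam (β '' Icc r t)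
  have hDmono : ∀ r s t, s ≤ t → D r s ≤ D r t := fun r s t hst =>
    Metric.diam_mono (image_mono (Icc_subset_Icc_right hst)) (hbd _)
  have hDadd : ∀ r s t, s ≤ t → D r t ≤ D r s + D s t := by
    intro r s t hst
    rcases le_total r s with h | h
    · have : β '' Icc r t = β '' Icc r s ∪ β '' Icc s t := by
        rw [← image_union, Icc_union_Icc_eq_Icc h hst]
      simp only [D]
      rw [this]
      exact Metric.diam_union' ⟨β s, ⟨s, ⟨h, le_rfl⟩, rfl⟩, ⟨s, ⟨le_rfl, hst⟩, rfl⟩⟩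
    · have h1 : D r t ≤ D s t :=
        Metric.diam_mono (image_mono (Icc_subset_Icc_left h)) (hbd _)
      have h2 : 0 ≤ D r s := Metric.diam_nonneg
      linarith
  have hDsmall : ∀ ε > 0, ∃ δ > 0, ∀ s t, dist s t < δ → D s t ≤ ε := by
    intro ε hε
    obtain ⟨δ, hδ, h⟩ := Metric.uniformContinuous_iff.1
      (CompactSpace.uniformContinuous_of_continuous hβ) ε hε
    refine ⟨δ, hδ, fun s t hst => Metric.diam_le_of_forall_dist_le hε.le ?_⟩
    rintro _ ⟨a, ⟨ha1, ha2⟩, rfl⟩ _ ⟨b, ⟨hb1, hb2⟩, rfl⟩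
    refine (h (lt_of_le_of_lt ?_ hst)).le
    simp only [Subtype.dist_eq, Real.dist_eq]
    have h1' : (s : ℝ) ≤ a := ha1
    have h2' : (a : ℝ) ≤ t := ha2
    have h3' : (s : ℝ) ≤ b := hb1
    have h4' : (b : ℝ) ≤ t := hb2
    rw [abs_of_nonpos (show (s : ℝ) - t ≤ 0 by linarith), abs_le]
    constructor <;> linarith
  have hDcont : ∀ r, Continuous (D r) := by
    intro r
    rw [Metric.continuous_iff]
    intro t ε hε
    obtain ⟨δ, hδ, h⟩ := hDsmall (ε / 2) (half_pos hε)
    refine ⟨δ, hδ, fun u hu => ?_⟩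
    rw [Real.dist_eq, abs_lt]
    rcases le_total u t with hut | hut
    · have h1 := hDmono r u t hut
      have h2 := hDadd r u t hut
      have h3 := h u t hu
      constructor <;> linarith
    · have h1 := hDmono r t u hut
      have h2 := hDadd r t u hut
      have h3 := h t u (by rwa [dist_comm])
      constructor <;> linarith
  let M : ℝ := Metric.diam (univ : Set X)
  have hDM : ∀ r t, D r t ≤ M := fun r t => Metric.diam_mono (subset_univ _) (hbd _)
  have hD0 : ∀ r t, 0 ≤ D r t := fun r t => Metric.diam_nonneg
  let r : ℕ → unitInterval := TopologicalSpace.denseSeq unitInterval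
  have hr : DenseRange r := TopologicalSpace.denseRange_denseSeq unitInterval
  let F : ℕ → unitInterval → ℝ := fun n t => (1 / 2 : ℝ) ^ n * D (r n) t
  have hsumM : Summable fun n : ℕ => (1 / 2 : ℝ) ^ n * M :=
    (summable_geometric_of_lt_one (by norm_num) (by norm_num)).mul_right M
  have hFb : ∀ n t, ‖F n t‖ ≤ (1 / 2 : ℝ) ^ n * M := by
    intro n t
    rw [Real.norm_of_nonneg (mul_nonneg (by positivity) (hD0 _ _))]
    exact mul_le_mul_of_nonneg_left (hDM _ _) (by positivity)
  have hFs : ∀ t, Summable fun n => F n t := fun t =>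
    Summable.of_norm_bounded hsumM (fun n => hFb n t)
  let φ : unitInterval → ℝ := fun t => ∑' n, F n t
  have hφc : Continuous φ :=
    continuous_tsum (fun n => continuous_const.mul (hDcont (r n))) hsumM hFb
  have hFmono : ∀ s t, s ≤ t → ∀ n, F n s ≤ F n t := fun s t hst n =>
    mul_le_mul_of_nonneg_left (hDmono _ _ _ hst) (by positivity)
  have hφmono : Monotone φ := fun s t hst =>
    Summable.tsum_le_tsum (hFmono s t hst) (hFs s) (hFs t)
  have hφlt : ∀ s t, s ≤ t → β s ≠ β t → φ s < φ t := by
    intro s t hst hne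
    have hlt : s < t := lt_of_le_of_ne hst (fun h => hne (by rw [h]))
    have hev : ∀ᶠ u in 𝓝[>] s, β u ≠ β t ∧ u < t := by
      refine Filter.Eventually.and ?_ (mem_nhdsWithin_of_mem_nhds (Iio_mem_nhds hlt))
      exact mem_nhdsWithin_of_mem_nhds (hβ.continuousAt.eventually_ne hne)
    have hopen : IsOpen {u | β u ≠ β t ∧ s < u ∧ u < t} :=
      (isOpen_ne_fun hβ continuous_const).inter isOpen_Ioo
    have : (𝓝[>] s).NeBot := nhdsGT_neBot_of_exists_gt ⟨t, hlt⟩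
    obtain ⟨u, hu, hu'⟩ := (hev.and self_mem_nhdsWithin).exists
    obtain ⟨n, hn1, hn2, hn3⟩ := hr.exists_mem_open hopen ⟨u, hu.1, hu', hu.2⟩
    refine Summable.tsum_lt_tsum (i := n) (hFmono s t hst) ?_ (hFs s) (hFs t)
    have h1 : D (r n) s = 0 := by
      simp only [D, Icc_eq_empty (not_le.2 hn2), image_empty, Metric.diam_empty]
    have h2 : 0 < D (r n) t := lt_of_lt_of_le (dist_pos.2 hn1)
      (Metric.dist_le_diam_of_mem (hbd _) ⟨r n, ⟨le_rfl, hn3.le⟩, rfl⟩ ⟨t, ⟨hn3.le, le_rfl⟩, rfl⟩)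
    simp only [F, h1, mul_zero]
    positivity
  have hφeq : ∀ s t, s ≤ t → β s = β t → φ s = φ t := by
    intro s t hst heq
    have h0 : D s t = 0 := by
      refine le_antisymm (Metric.diam_le_of_forall_dist_le le_rfl ?_) (hD0 _ _)
      rintro _ ⟨a, ⟨ha1, ha2⟩, rfl⟩ _ ⟨b, ⟨hb1, hb2⟩, rfl⟩
      rw [hmono s a t ha1 ha2 heq, hmono s b t hb1 hb2 heq, dist_self]
    refine tsum_congr fun n => ?_
    have h1 := hDadd (r n) s t hst
    have h2 := hDmono (r n) s t hst
    simp only [F]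
    congr 1
    linarith
  have hiff : ∀ s t, φ s = φ t ↔ β s = β t := by
    intro s t
    rcases le_total s t with h | h
    · exact ⟨fun he => by_contra fun hne => (hφlt s t h hne).ne he, hφeq s t h⟩
    · exact ⟨fun he => by_contra fun hne => (hφlt t s h (Ne.symm hne)).ne he.symm,
        fun he => (hφeq t s h he.symm).symm⟩
  have hc : 0 < φ 1 - φ 0 := sub_pos.2 (hφlt 0 1 unitInterval.nonneg' h01)
  let ψ : unitInterval → unitInterval := fun t => ⟨(φ t - φ 0) / (φ 1 - φ 0), by
    have h1 := hφmono (show 0 ≤ t from unitInterval.nonneg')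
    have h2 := hφmono (show t ≤ 1 from unitInterval.le_one')
    exact ⟨div_nonneg (by linarith) hc.le, (div_le_one hc).2 (by linarith)⟩⟩
  have hψc : Continuous ψ :=
    Continuous.subtype_mk ((hφc.sub continuous_const).div_const _) _
  have hψ0 : ψ 0 = 0 := Subtype.ext (by simp [ψ])
  have hψ1 : ψ 1 = 1 := Subtype.ext (by simp [ψ, hc.ne'])
  have hψs : Function.Surjective ψ := by
    intro v
    have := intermediate_value_univ 0 1 hψc
    rw [hψ0, hψ1] at this
    exact this ⟨unitInterval.nonneg', unitInterval.le_one'⟩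
  have hψiff : ∀ s t, ψ s = ψ t ↔ β s = β t := by
    intro s t
    rw [← hiff]
    refine Subtype.ext_iff.trans ?_
    change (φ s - φ 0) / (φ 1 - φ 0) = (φ t - φ 0) / (φ 1 - φ 0) ↔ _
    rw [div_left_inj' hc.ne', sub_left_inj]
  have hq : IsQuotientMap ψ := hψc.isClosedMap.isQuotientMap hψc hψs
  have hcomp : ∀ t, β (Function.surjInv hψs (ψ t)) = β t := fun t =>
    (hψiff _ _).1 (Function.surjInv_eq hψs (ψ t))
  refine ⟨β ∘ Function.surjInv hψs, ?_, ?_, ?_, ?_⟩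
  · rw [hq.continuous_iff]
    have : (β ∘ Function.surjInv hψs) ∘ ψ = β := funext hcomp
    rw [this]
    exact hβ
  · intro u v huv
    have := (hψiff _ _).2 huv
    rwa [Function.surjInv_eq hψs, Function.surjInv_eq hψs] at this
  · have := hcomp 0
    rwa [hψ0] at this
  · have := hcomp 1
    rwa [hψ1] at this

/-- Every compact, connected, locally connected metric space is arcwise connected. -/
theorem arcwise_connected {X : Type*} [MetricSpace X] [CompactSpace X]
    [ConnectedSpace X] [LocallyConnectedSpace X] (x y : X) (hxy : x ≠ y) :
    JoinedByArcIn (Set.univ : Set X) x y := by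
  obtain ⟨γ, hγ, h0, h1⟩ := exists_path_of_compact x y
  obtain ⟨β, hβ, hβ0, hβ1, hmono⟩ := exists_monotone_path γ hγ
  obtain ⟨α, hα, hinj, hα0, hα1⟩ := exists_arc_of_monotone_path β hβ
    (by rwa [hβ0, hβ1, h0, h1]) hmono
  exact ⟨α, hα, hinj, by rw [hα0, hβ0, h0], by rw [hα1, hβ1, h1], subset_univ _⟩
end

section
/- Let f : ℂ → ℂ be the evaluation map of a polynomial of degree d ≥ 2. Then the filled Julia set K_f is nonempty and compact, and consequently the Julia set J_f = ∂K_f is nonempty and compact. -/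
open Function Set Topology

/-- The filled Julia set of `f`: points with bounded forward orbit. -/
def filledJulia (f : ℂ → ℂ) : Set ℂ :=
  {z : ℂ | Bornology.IsBounded (Set.range fun n => f^[n] z)}

lemma escape_radius (p : Polynomial ℂ) (h : 2 ≤ p.natDegree) :
    ∃ R : ℝ, 0 < R ∧ ∀ z : ℂ, R ≤ ‖z‖ → 2 * ‖z‖ ≤ ‖p.eval z‖ := by
  have hq : 0 < p.divX.degree := by
    apply Polynomial.natDegree_pos_iff_degree_pos.mp
    rw [Polynomial.natDegree_divX_eq_natDegree_tsub_one]
    omega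
  have ht := p.divX.tendsto_norm_atTop hq (tendsto_norm_cobounded_atTop (E := ℂ))
  have h3 := ht.eventually_ge_atTop 3
  rw [← comap_norm_atTop, Filter.eventually_comap, Filter.eventually_atTop] at h3
  obtain ⟨R, hR⟩ := h3
  refine ⟨max (max R 1) ‖p.coeff 0‖, by positivity, fun z hz => ?_⟩
  have h1 : R ≤ ‖z‖ := le_trans (le_trans (le_max_left _ _) (le_max_left _ _)) hz
  have h2 : ‖p.coeff 0‖ ≤ ‖z‖ := le_trans (le_max_right _ _) hz
  have h4 := hR ‖z‖ h1 z rfl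
  have h5 : p.eval z = p.divX.eval z * z + p.coeff 0 := by
    conv_lhs => rw [← p.divX_mul_X_add]
    simp
  have h6 : ‖p.divX.eval z * z‖ ≤ ‖p.eval z‖ + ‖p.coeff 0‖ := by
    have : p.divX.eval z * z = p.eval z - p.coeff 0 := by rw [h5]; ring
    rw [this]
    exact norm_sub_le _ _
  rw [norm_mul] at h6
  nlinarith [norm_nonneg z]

/-- The filled Julia set is nonempty and compact; hence so is the Julia set. -/
theorem filledJulia_nonempty_compact (p : Polynomial ℂ) (d : ℕ) (hd : 2 ≤ d)
    (hdeg : p.natDegree = d) (f : ℂ → ℂ) (hf : ∀ z, f z = p.eval z) :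
    (filledJulia f).Nonempty ∧ IsCompact (filledJulia f) ∧
      (frontier (filledJulia f)).Nonempty ∧ IsCompact (frontier (filledJulia f)) := by
  subst hdeg
  obtain ⟨R, hR0, hR⟩ := escape_radius p hd
  have hfe : f = fun z => p.eval z := funext hf
  have hcont : Continuous f := by rw [hfe]; exact p.continuous
  have hne : (filledJulia f).Nonempty := by
    have hdg : (p - Polynomial.X).natDegree = p.natDegree :=
      Polynomial.natDegree_sub_eq_left_of_natDegree_lt (by
        rw [Polynomial.natDegree_X]; omega)
    obtain ⟨z, hz⟩ := Complex.exists_root (f := p - Polynomial.X)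
      (Polynomial.natDegree_pos_iff_degree_pos.mp (by omega))
    have hfix : f z = z := by
      rw [hf]
      simpa [Polynomial.IsRoot, sub_eq_zero] using hz
    refine ⟨z, ?_⟩
    have : (fun n => f^[n] z) = fun _ => z := funext fun n => Function.iterate_fixed hfix n
    simp [filledJulia, this]
  have heq : filledJulia f = ⋂ n : ℕ, (f^[n]) ⁻¹' Metric.closedBall 0 R := by
    ext z
    simp only [filledJulia, mem_setOf_eq, mem_iInter, mem_preimage, mem_closedBall_zero_iff]
    constructor
    · intro hb n
      by_contra! hn
      obtain ⟨C, hC⟩ := hb.exists_norm_le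
      have key : ∀ k : ℕ, 2 ^ k * R ≤ ‖f^[k + n] z‖ := by
        intro k
        induction k with
        | zero => simpa using hn.le
        | succ k ih =>
          have h1 : R ≤ ‖f^[k + n] z‖ :=
            le_trans (le_mul_of_one_le_left hR0.le (one_le_pow₀ (by norm_num))) ih
          have h2 := hR _ h1
          rw [← hf, ← Function.iterate_succ_apply' f] at h2
          rw [show k + 1 + n = (k + n).succ by omega, pow_succ]
          linarith
      obtain ⟨k, hk⟩ := pow_unbounded_of_one_lt (C / R) (by norm_num : (1 : ℝ) < 2)
      rw [div_lt_iff₀ hR0] at hk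
      have := hC _ (mem_range_self (k + n))
      have := key k
      linarith
    · intro h
      exact isBounded_iff_forall_norm_le.mpr ⟨R, by rintro _ ⟨n, rfl⟩; exact h n⟩
  have hcomp : IsCompact (filledJulia f) := by
    refine (isCompact_closedBall (0 : ℂ) R).of_isClosed_subset ?_ ?_
    · rw [heq]
      exact isClosed_iInter fun n => Metric.isClosed_closedBall.preimage (hcont.iterate n)
    · rw [heq]
      exact iInter_subset _ 0
  refine ⟨hne, hcomp, nonempty_frontier_iff.mpr ⟨hne, hcomp.ne_univ⟩, ?_⟩
  exact hcomp.of_isClosed_subset isClosed_frontier hcomp.isClosed.frontier_subset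
end
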